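/- Let M be an Orlicz function, 1 ≤ p < ∞ and m ≥ 1, n ≥ 1 integers. Then ℓ_p(M, Δ_m^n) = { real sequences x = (x_k)_{k≥1} : there exists ρ > 0 with Σ_{k=1}^∞ (M(|Δ_m^n x_k|/ρ))^p < ∞ } is a complete metric space with respect to the metric f₃(x,y) = Σ_{r=1}^{mn} |x_r − y_r| + inf{ ρ > 0 : (Σ_{k=1}^∞ (M(|Δ_m^n x_k − Δ_m^n y_k|/ρ))^p)^{1/p} ≤ 1 }. -/

import Mathlib

/-!
Statement 9 (Paper: Proposition 3.2(iii)).  `ℓ_p(M, Δ_m^n)` is a complete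
metric space with respect to the metric `f₃`.  Sequences are indexed so that
`x k` represents the paper's `x_{k+1}`.
-/

open scoped ENNReal

/-- An Orlicz function. -/
def IsOrliczFunction (M : ℝ → ℝ) : Prop :=
  ContinuousOn M (Set.Ici 0) ∧ MonotoneOn M (Set.Ici 0) ∧ ConvexOn ℝ (Set.Ici 0) M ∧
    M 0 = 0 ∧ (∀ x : ℝ, 0 < x → 0 < M x) ∧ Filter.Tendsto M Filter.atTop Filter.atTop

/-- The generalized difference operator. -/
def delta (m : ℕ) : ℕ → (ℕ → ℝ) → ℕ → ℝ
  | 0, x => x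
  | n + 1, x => fun k => delta m n x k - delta m n x (k + m)

/-- `∑_{k=1}^∞ (M (|x_k| / ρ))^p`, valued in `ℝ≥0∞`. -/
noncomputable def lpSum (M : ℝ → ℝ) (p : ℝ) (x : ℕ → ℝ) (ρ : ℝ) : ℝ≥0∞ :=
  ∑' k : ℕ, ENNReal.ofReal (M (|x k| / ρ)) ^ p

/-- The space `ℓ_p(M, Δ_m^n)`. -/
def lpMDelta (M : ℝ → ℝ) (p : ℝ) (m n : ℕ) : Set (ℕ → ℝ) :=
  {x | ∃ ρ > 0, lpSum M p (delta m n x) ρ < ⊤}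

/-- The metric `f₃`. -/
noncomputable def f3 (M : ℝ → ℝ) (p : ℝ) (m n : ℕ) (x y : ℕ → ℝ) : ℝ :=
  (∑ r ∈ Finset.range (m * n), |x r - y r|) +
    sInf {ρ : ℝ | 0 < ρ ∧
      (lpSum M p (fun k => delta m n x k - delta m n y k) ρ) ^ (1 / p) ≤ 1}

/-!
With `φ = M ^ p`, again an Orlicz function, the exponent disappears: the infimum in `f₃` is the
gauge of the set `B = {z | ∑ φ(|z_k|) ≤ 1}` at `Δ_m^n x - Δ_m^n y`, and `x` lies in
`ℓ_p(M, Δ_m^n)` exactly when `Δ_m^n x` lies in the span of `B`. In `ℝ^ℕ` with the product topology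
`B` is absolutely convex, bounded, and closed (by lower semicontinuity of the sum), and the span of
such a set in a complete Hausdorff space is a Banach space under its gauge. Finally, a sequence is
determined by its first `mn` terms and its `n`-th difference, both of which can be prescribed
freely, so `(ℓ_p(M, Δ_m^n), f₃)` is isometric to the `ℓ¹`-sum of `ℝ^{mn}` and that Banach space.
-/

open Filter Metric Set
open scoped Pointwise Topology

-- A Cauchy sequence converges in `Y`; closedness puts the limit in the image of small balls of `X`.
theorem completeSpace_of_isClosed_image_closedBall {X Y : Type*} [PseudoMetricSpace X]
    [UniformSpace Y] [CompleteSpace Y] {f : X → Y} (hf : UniformContinuous f)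
    (hinj : Function.Injective f) (hclosed : ∀ x, ∀ r > 0, IsClosed (f '' closedBall x r)) :
    CompleteSpace X := by
  refine Metric.complete_of_cauchySeq_tendsto fun u hu => ?_
  obtain ⟨y, hy⟩ := cauchySeq_tendsto_of_complete (hf.comp_cauchySeq hu)
  have hmem : ∀ r > 0, ∃ N, ∀ n ≥ N, y ∈ f '' closedBall (u n) r := fun r hr => by
    obtain ⟨N, hN⟩ := Metric.cauchySeq_iff.1 hu r hr
    refine ⟨N, fun n hn => (hclosed (u n) r hr).mem_of_tendsto hy ?_⟩
    filter_upwards [eventually_ge_atTop N] with k hk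
    exact mem_image_of_mem f (hN k hk n hn).le
  obtain ⟨N₁, hN₁⟩ := hmem 1 one_pos
  obtain ⟨x, -, rfl⟩ := hN₁ N₁ le_rfl
  refine ⟨x, Metric.tendsto_atTop'.2 fun r hr => ?_⟩
  obtain ⟨N, hN⟩ := hmem (r / 2) (half_pos hr)
  refine ⟨N, fun n hn => ?_⟩
  rw [dist_comm]
  exact ((hinj.mem_set_image.1 (hN n hn.le)) : dist x (u n) ≤ r / 2).trans_lt (half_lt_self hr)

theorem exists_metricSpace_completeSpace_of_bijective {X Y : Type*} [MetricSpace Y]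
    [CompleteSpace Y] {f : X → Y} (hf : Function.Bijective f) :
    ∃ inst : MetricSpace X, (∀ a b : X, @dist X inst.toDist a b = dist (f a) (f b)) ∧
      @CompleteSpace X inst.toUniformSpace := by
  let _ : MetricSpace X := .induced f hf.injective inferInstance
  have hisom : Isometry f := .of_dist_eq fun _ _ => rfl
  exact ⟨inferInstance, fun _ _ => rfl,
    (hisom.isUniformInducing.completeSpace_congr hf.surjective).2 inferInstance⟩

section Disk

variable {E : Type*} [AddCommGroup E] [Module ℝ E]

theorem gauge_preimage {F : Type*} [AddCommGroup F] [Module ℝ F] (f : F →ₗ[ℝ] E) (s : Set E)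
    (x : F) : gauge (f ⁻¹' s) x = gauge s (f x) := by
  simp only [gauge_def', mem_preimage, map_smul]

theorem mem_span_iff_of_absConvex {B : Set E} (hB : AbsConvex ℝ B) (hne : B.Nonempty) {x : E} :
    x ∈ Submodule.span ℝ B ↔ ∃ r : ℝ, 0 < r ∧ x ∈ r • B := by
  refine ⟨fun hx => ?_, ?_⟩
  · induction hx using Submodule.span_induction with
    | mem x hx => exact ⟨1, one_pos, by rwa [one_smul]⟩
    | zero => exact ⟨1, one_pos, by rw [one_smul]; exact hB.1.zero_mem hne⟩
    | add x y _ _ hx hy =>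
      obtain ⟨a, ha, hxa⟩ := hx
      obtain ⟨b, hb, hyb⟩ := hy
      refine ⟨a + b, add_pos ha hb, ?_⟩
      rw [hB.2.add_smul ha.le hb.le]
      exact add_mem_add hxa hyb
    | smul c x _ hx =>
      obtain ⟨a, ha, hxa⟩ := hx
      refine ⟨(|c| + 1) * a, by positivity, ?_⟩
      rw [mul_smul]
      refine (hB.1.smul a).smul_mono ?_ (smul_mem_smul_set hxa)
      rw [Real.norm_eq_abs, Real.norm_of_nonneg (by positivity)]
      linarith
  · rintro ⟨r, -, y, hy, rfl⟩
    exact Submodule.smul_mem _ r (Submodule.subset_span hy)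

theorem absorbent_preimage_span_of_absConvex {B : Set E} (hB : AbsConvex ℝ B) (hne : B.Nonempty) :
    Absorbent ℝ ((Submodule.span ℝ B).subtype ⁻¹' B) := by
  intro x
  obtain ⟨r, hr, hx⟩ := (mem_span_iff_of_absConvex hB hne).1 x.2
  refine absorbs_iff_norm.2 ⟨r, fun c hc => ?_⟩
  have hc0 : c ≠ 0 := norm_pos_iff.1 (hr.trans_le hc)
  rw [singleton_subset_iff, mem_smul_set_iff_inv_smul_mem₀ hc0, mem_preimage, map_smul,
    ← mem_smul_set_iff_inv_smul_mem₀ hc0]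
  exact hB.1.smul_mono (by rwa [Real.norm_of_nonneg hr.le]) hx

/-- The linear span of `B` as a type of its own, so that it can carry the gauge of `B` as its norm
rather than the topology induced by the ambient space. -/
def GaugeSpan (B : Set E) : Type _ := Submodule.span ℝ B

namespace GaugeSpan

variable {B : Set E}

noncomputable instance : AddCommGroup (GaugeSpan B) :=
  inferInstanceAs (AddCommGroup (Submodule.span ℝ B))

noncomputable instance : Module ℝ (GaugeSpan B) :=
  inferInstanceAs (Module ℝ (Submodule.span ℝ B))

/-- The inclusion of the span of `B` into the ambient space. -/
def val : GaugeSpan B →ₗ[ℝ] E := (Submodule.span ℝ B).subtype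

theorem val_injective : Function.Injective (val : GaugeSpan B → E) := Subtype.val_injective

theorem val_mem_span (x : GaugeSpan B) : val x ∈ Submodule.span ℝ B := Subtype.property x

theorem exists_val_eq {x : E} (hx : x ∈ Submodule.span ℝ B) : ∃ y : GaugeSpan B, val y = x :=
  ⟨⟨x, hx⟩, rfl⟩

noncomputable instance : Norm (GaugeSpan B) := ⟨fun x => gauge B (val x)⟩

theorem norm_def (x : GaugeSpan B) : ‖x‖ = gauge B (val x) := rfl

end GaugeSpan

theorem mem_smul_of_gauge_le [TopologicalSpace E] [ContinuousSMul ℝ E] {B : Set E}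
    (hB : AbsConvex ℝ B) (hne : B.Nonempty) (hclosed : IsClosed B) {x : E}
    (hx : x ∈ Submodule.span ℝ B) {r : ℝ} (hr : 0 < r) (h : gauge B x ≤ r) : x ∈ r • B := by
  have hlt : ∀ s > r, s⁻¹ • x ∈ B := fun s hs => by
    have hgauge : gauge ((Submodule.span ℝ B).subtype ⁻¹' B) ⟨x, hx⟩ < s := by
      rw [gauge_preimage]
      exact h.trans_lt hs
    obtain ⟨b, hb, hbs, hxb⟩ := exists_lt_of_gauge_lt
      (absorbent_preimage_span_of_absConvex hB hne) hgauge
    rw [mem_smul_set_iff_inv_smul_mem₀ hb.ne', mem_preimage, map_smul,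
      ← mem_smul_set_iff_inv_smul_mem₀ hb.ne'] at hxb
    rw [← mem_smul_set_iff_inv_smul_mem₀ (hb.trans hbs).ne']
    refine hB.1.smul_mono ?_ hxb
    rw [Real.norm_of_nonneg hb.le, Real.norm_of_nonneg (hb.trans hbs).le]
    exact hbs.le
  rw [mem_smul_set_iff_inv_smul_mem₀ hr.ne']
  have hlim : Tendsto (fun s : ℝ => s⁻¹ • x) (𝓝[>] r) (𝓝 (r⁻¹ • x)) :=
    ((tendsto_inv₀ hr.ne').mono_left nhdsWithin_le_nhds).smul_const x
  exact hclosed.mem_of_tendsto hlim (eventually_nhdsWithin_of_forall hlt)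

theorem eq_zero_of_forall_mem_smul [TopologicalSpace E] [T2Space E] {B : Set E}
    (hB : Bornology.IsVonNBounded ℝ B) {x : E} (h : ∀ r : ℝ, 0 < r → x ∈ r • B) : x = 0 := by
  have hlim : Tendsto (fun r : ℝ => r • r⁻¹ • x) (𝓝[>] 0) (𝓝 0) :=
    hB.smul_tendsto_zero (eventually_nhdsWithin_of_forall fun r hr =>
      (mem_smul_set_iff_inv_smul_mem₀ (ne_of_gt hr) _ _).1 (h r hr)) nhdsWithin_le_nhds
  refine tendsto_nhds_unique (tendsto_const_nhds.congr' ?_) hlim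
  exact eventually_nhdsWithin_of_forall fun r hr => (smul_inv_smul₀ (ne_of_gt hr) x).symm

/-- Closed bounded disks: the sets whose gauge is a norm on their span with `B` as closed unit ball.
Stated as a class so that `GaugeSpan B` finds its norm by instance search. -/
class IsClosedBoundedDisk [TopologicalSpace E] (B : Set E) : Prop where
  absConvex : AbsConvex ℝ B
  nonempty : B.Nonempty
  isClosed : IsClosed B
  isVonNBounded : Bornology.IsVonNBounded ℝ B

namespace GaugeSpan

section Normed

variable [TopologicalSpace E] [T2Space E] [ContinuousSMul ℝ E] {B : Set E}
  [hB : IsClosedBoundedDisk B]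

theorem normedSpaceCore : NormedSpace.Core ℝ (GaugeSpan B) where
  norm_nonneg x := gauge_nonneg _
  norm_smul c x := gauge_smul hB.absConvex.1 c _
  norm_triangle x y := by
    have habs : Absorbent ℝ (val ⁻¹' B : Set (GaugeSpan B)) :=
      absorbent_preimage_span_of_absConvex hB.absConvex hB.nonempty
    simpa only [norm_def, gauge_preimage] using
      gauge_add_le (hB.absConvex.2.linear_preimage val) habs x y
  norm_eq_zero_iff x := by
    refine ⟨fun h => val_injective ?_, ?_⟩
    · rw [map_zero]
      exact eq_zero_of_forall_mem_smul hB.isVonNBounded fun r hr =>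
        mem_smul_of_gauge_le hB.absConvex hB.nonempty hB.isClosed (val_mem_span x) hr
          (h.trans_le hr.le)
    · rintro rfl
      exact gauge_zero

noncomputable instance : NormedAddCommGroup (GaugeSpan B) := .ofCore normedSpaceCore

noncomputable instance : NormedSpace ℝ (GaugeSpan B) := .ofCore normedSpaceCore

theorem dist_eq (x y : GaugeSpan B) : dist x y = gauge B (val x - val y) := by
  rw [dist_eq_norm, norm_def, map_sub]

theorem image_val_closedBall (x : GaugeSpan B) {r : ℝ} (hr : 0 < r) :
    val '' closedBall x r = val x +ᵥ r • B := by
  ext y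
  constructor
  · rintro ⟨z, hz, rfl⟩
    rw [mem_closedBall, dist_eq, ← map_sub] at hz
    rw [mem_vadd_set_iff_neg_vadd_mem, vadd_eq_add, neg_add_eq_sub, ← map_sub]
    exact mem_smul_of_gauge_le hB.absConvex hB.nonempty hB.isClosed (val_mem_span _) hr hz
  · rintro ⟨_, ⟨b, hb, rfl⟩, rfl⟩
    obtain ⟨w, rfl⟩ := exists_val_eq (Submodule.subset_span hb)
    refine ⟨x + r • w, ?_, by simp⟩
    rw [mem_closedBall, dist_eq, ← map_sub, add_sub_cancel_left, map_smul]
    exact gauge_le_of_mem hr.le (smul_mem_smul_set hb)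

end Normed

variable [UniformSpace E] [IsUniformAddGroup E] [ContinuousSMul ℝ E] [T2Space E] {B : Set E}
  [hB : IsClosedBoundedDisk B]

theorem uniformContinuous_val : UniformContinuous (val : GaugeSpan B → E) := by
  have hbdd : Bornology.IsVonNBounded ℝ (val '' closedBall (0 : GaugeSpan B) 1) := by
    rw [image_val_closedBall 0 one_pos, map_zero, zero_vadd, one_smul]
    exact hB.isVonNBounded
  exact (val.clmOfExistsBoundedImage ⟨_, closedBall_mem_nhds 0 one_pos, hbdd⟩).uniformContinuous

instance [CompleteSpace E] : CompleteSpace (GaugeSpan B) := by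
  refine completeSpace_of_isClosed_image_closedBall uniformContinuous_val val_injective
    fun x r hr => ?_
  rw [image_val_closedBall x hr]
  exact (hB.isClosed.smul_of_ne_zero hr.ne').vadd _

end GaugeSpan

end Disk

theorem IsOrliczFunction.nonneg {φ : ℝ → ℝ} (hφ : IsOrliczFunction φ) {t : ℝ} (ht : 0 ≤ t) :
    0 ≤ φ t := by
  obtain ⟨-, hmono, -, hzero, -, -⟩ := hφ
  exact hzero ▸ hmono self_mem_Ici ht ht

theorem IsOrliczFunction.rpow {M : ℝ → ℝ} (hM : IsOrliczFunction M) {p : ℝ} (hp : 1 ≤ p) :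
    IsOrliczFunction fun t => M t ^ p := by
  have hnonneg : ∀ t ∈ Ici (0 : ℝ), 0 ≤ M t := fun t ht => hM.nonneg ht
  have hp0 : 0 < p := one_pos.trans_le hp
  obtain ⟨hcont, hmono, hconv, hzero, hpos, htop⟩ := hM
  refine ⟨hcont.rpow_const fun _ _ => .inr hp0.le, fun s hs t ht hst =>
    Real.rpow_le_rpow (hnonneg s hs) (hmono hs ht hst) hp0.le, ?_, ?_,
    fun t ht => Real.rpow_pos_of_pos (hpos t ht) p, (tendsto_rpow_atTop hp0).comp htop⟩
  · refine ⟨hconv.1, fun s hs t ht a b ha hb hab => ?_⟩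
    calc M (a • s + b • t) ^ p ≤ (a • M s + b • M t) ^ p :=
          Real.rpow_le_rpow (hnonneg _ (hconv.1 hs ht ha hb hab)) (hconv.2 hs ht ha hb hab) hp0.le
      _ ≤ a • M s ^ p + b • M t ^ p :=
          (convexOn_rpow hp).2 (hnonneg s hs) (hnonneg t ht) ha hb hab
  · simp only [hzero, Real.zero_rpow hp0.ne']

theorem IsOrliczFunction.continuous_comp_abs {φ : ℝ → ℝ} (hφ : IsOrliczFunction φ) :
    Continuous fun t => φ |t| :=
  hφ.1.comp_continuous continuous_abs abs_nonneg

theorem IsOrliczFunction.map_abs_add_le {φ : ℝ → ℝ} (hφ : IsOrliczFunction φ) {a b : ℝ}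
    (ha : 0 ≤ a) (hb : 0 ≤ b) (hab : a + b = 1) (s t : ℝ) :
    φ |a * s + b * t| ≤ a * φ |s| + b * φ |t| := by
  obtain ⟨-, hmono, hconv, -⟩ := hφ
  refine (hmono (mem_Ici.2 (abs_nonneg _)) (mem_Ici.2 (by positivity)) ?_).trans
    (hconv.2 (abs_nonneg s) (abs_nonneg t) ha hb hab)
  calc |a * s + b * t| ≤ |a * s| + |b * t| := abs_add_le _ _
    _ = a • |s| + b • |t| := by simp only [abs_mul, abs_of_nonneg ha, abs_of_nonneg hb, smul_eq_mul]

/-- The modular `∑ φ(|z_k|)` of the Orlicz sequence space of `φ`. -/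
noncomputable def orliczModular {ι : Type*} (φ : ℝ → ℝ) (z : ι → ℝ) : ℝ≥0∞ :=
  ∑' k, ENNReal.ofReal (φ |z k|)

/-- The unit ball of the Luxemburg norm: the gauge of this set is that norm. -/
def orliczBall {ι : Type*} (φ : ℝ → ℝ) : Set (ι → ℝ) :=
  {z | orliczModular φ z ≤ 1}

section Orlicz

variable {ι : Type*} {φ : ℝ → ℝ}

theorem orliczModular_neg (φ : ℝ → ℝ) (z : ι → ℝ) : orliczModular φ (-z) = orliczModular φ z := by
  simp only [orliczModular, Pi.neg_apply, abs_neg]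

theorem orliczModular_zero (hφ : IsOrliczFunction φ) : orliczModular φ (0 : ι → ℝ) = 0 := by
  obtain ⟨-, -, -, hzero, -, -⟩ := hφ
  simp only [orliczModular, Pi.zero_apply, abs_zero, hzero, ENNReal.ofReal_zero, tsum_zero]

theorem orliczModular_add_le (hφ : IsOrliczFunction φ) {a b : ℝ} (ha : 0 ≤ a) (hb : 0 ≤ b)
    (hab : a + b = 1) (z w : ι → ℝ) :
    orliczModular φ (a • z + b • w) ≤
      ENNReal.ofReal a * orliczModular φ z + ENNReal.ofReal b * orliczModular φ w := by
  simp only [orliczModular, ← ENNReal.tsum_mul_left, ← ENNReal.tsum_add, ← ENNReal.ofReal_mul ha,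
    ← ENNReal.ofReal_mul hb]
  refine ENNReal.tsum_le_tsum fun k => ?_
  rw [← ENNReal.ofReal_add (mul_nonneg ha (hφ.nonneg (abs_nonneg _)))
    (mul_nonneg hb (hφ.nonneg (abs_nonneg _)))]
  exact ENNReal.ofReal_le_ofReal (hφ.map_abs_add_le ha hb hab (z k) (w k))

theorem orliczModular_smul_le (hφ : IsOrliczFunction φ) {a : ℝ} (ha : 0 ≤ a) (ha1 : a ≤ 1)
    (z : ι → ℝ) : orliczModular φ (a • z) ≤ ENNReal.ofReal a * orliczModular φ z := by
  simpa only [smul_zero, add_zero, orliczModular_zero hφ, mul_zero] using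
    orliczModular_add_le hφ ha (sub_nonneg.2 ha1) (add_sub_cancel a 1) z 0

theorem lowerSemicontinuous_orliczModular (hφ : IsOrliczFunction φ) :
    LowerSemicontinuous (orliczModular φ : (ι → ℝ) → ℝ≥0∞) :=
  lowerSemicontinuous_tsum fun k => (ENNReal.continuous_ofReal.comp
    (hφ.continuous_comp_abs.comp (continuous_apply k))).lowerSemicontinuous

theorem convex_orliczBall (hφ : IsOrliczFunction φ) : Convex ℝ (orliczBall φ : Set (ι → ℝ)) := by
  intro z hz w hw a b ha hb hab
  calc orliczModular φ (a • z + b • w)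
      ≤ ENNReal.ofReal a * orliczModular φ z + ENNReal.ofReal b * orliczModular φ w :=
        orliczModular_add_le hφ ha hb hab z w
    _ ≤ ENNReal.ofReal a * 1 + ENNReal.ofReal b * 1 := by gcongr <;> assumption
    _ = 1 := by rw [mul_one, mul_one, ← ENNReal.ofReal_add ha hb, hab, ENNReal.ofReal_one]

theorem isVonNBounded_orliczBall (hφ : IsOrliczFunction φ) :
    Bornology.IsVonNBounded ℝ (orliczBall φ : Set (ι → ℝ)) := by
  obtain ⟨-, hmono, -, -, -, htop⟩ := hφ
  obtain ⟨T, hT1, hT0⟩ : ∃ T, 1 < φ T ∧ 0 ≤ T :=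
    ((htop.eventually_gt_atTop 1).and (eventually_ge_atTop 0)).exists
  refine Bornology.isVonNBounded_pi_iff.2 fun k => (NormedSpace.isVonNBounded_iff ℝ).2
    (isBounded_iff_forall_norm_le.2 ⟨T, ?_⟩)
  rintro _ ⟨z, hz, rfl⟩
  have hle : φ |z k| ≤ 1 := ENNReal.ofReal_le_one.1 ((ENNReal.le_tsum k).trans hz)
  by_contra! hlt
  exact (hT1.trans_le (hmono hT0 (mem_Ici.2 (abs_nonneg _)) hlt.le)).not_ge hle

theorem isClosedBoundedDisk_orliczBall (hφ : IsOrliczFunction φ) :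
    IsClosedBoundedDisk (orliczBall φ : Set (ι → ℝ)) where
  absConvex := ⟨(balanced_iff_neg_mem (convex_orliczBall hφ)).2 fun {z} hz =>
    (orliczModular_neg φ z).trans_le hz, convex_orliczBall hφ⟩
  nonempty := ⟨0, (orliczModular_zero hφ).trans_le zero_le_one⟩
  isClosed := (lowerSemicontinuous_orliczModular hφ).isClosed_preimage 1
  isVonNBounded := isVonNBounded_orliczBall hφ

theorem mem_span_orliczBall_iff (hφ : IsOrliczFunction φ) {z : ι → ℝ} :
    z ∈ Submodule.span ℝ (orliczBall φ) ↔ ∃ ρ > (0 : ℝ), orliczModular φ (ρ⁻¹ • z) < ⊤ := by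
  have hdisk := isClosedBoundedDisk_orliczBall (ι := ι) hφ
  rw [mem_span_iff_of_absConvex hdisk.absConvex hdisk.nonempty]
  constructor
  · rintro ⟨ρ, hρ, hz⟩
    exact ⟨ρ, hρ, ((mem_smul_set_iff_inv_smul_mem₀ hρ.ne' _ _).1 hz).trans_lt ENNReal.one_lt_top⟩
  · rintro ⟨ρ, hρ, hfin⟩
    set S := (orliczModular φ (ρ⁻¹ • z)).toReal with hS
    have hS0 : 0 ≤ S := ENNReal.toReal_nonneg
    refine ⟨ρ * (S + 1), by positivity, (mem_smul_set_iff_inv_smul_mem₀ (by positivity) _ _).2 ?_⟩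
    calc orliczModular φ ((ρ * (S + 1))⁻¹ • z)
        = orliczModular φ ((S + 1)⁻¹ • ρ⁻¹ • z) := by rw [smul_smul, mul_inv_rev]
      _ ≤ ENNReal.ofReal (S + 1)⁻¹ * orliczModular φ (ρ⁻¹ • z) :=
          orliczModular_smul_le hφ (by positivity) (inv_le_one_of_one_le₀ (by linarith)) _
      _ = ENNReal.ofReal ((S + 1)⁻¹ * S) := by
          rw [ENNReal.ofReal_mul (by positivity), hS, ENNReal.ofReal_toReal hfin.ne]
      _ ≤ 1 := by
          rw [ENNReal.ofReal_le_one, inv_mul_le_one₀ (by positivity)]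
          linarith

end Orlicz

theorem lpSum_eq_orliczModular {M : ℝ → ℝ} (hM : IsOrliczFunction M) {p : ℝ} (hp : 0 ≤ p)
    (z : ℕ → ℝ) {ρ : ℝ} (hρ : 0 < ρ) :
    lpSum M p z ρ = orliczModular (fun t => M t ^ p) (ρ⁻¹ • z) := by
  refine tsum_congr fun k => ?_
  rw [ENNReal.ofReal_rpow_of_nonneg (hM.nonneg (by positivity)) hp, Pi.smul_apply, smul_eq_mul,
    abs_mul, abs_of_pos (inv_pos.2 hρ), div_eq_inv_mul]

theorem mem_lpMDelta_iff {M : ℝ → ℝ} (hM : IsOrliczFunction M) {p : ℝ} (hp : 1 ≤ p) {m n : ℕ}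
    {x : ℕ → ℝ} :
    x ∈ lpMDelta M p m n ↔ delta m n x ∈ Submodule.span ℝ (orliczBall fun t => M t ^ p) := by
  rw [mem_span_orliczBall_iff (hM.rpow hp)]
  refine exists_congr fun ρ => and_congr_right fun hρ => ?_
  rw [lpSum_eq_orliczModular hM (zero_le_one.trans hp) _ hρ]

theorem gauge_orliczBall_eq_sInf {M : ℝ → ℝ} (hM : IsOrliczFunction M) {p : ℝ} (hp : 0 < p)
    (z : ℕ → ℝ) :
    gauge (orliczBall fun t => M t ^ p) z = sInf {ρ : ℝ | 0 < ρ ∧ lpSum M p z ρ ^ (1 / p) ≤ 1} := by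
  rw [gauge_def']
  congr 1 with ρ
  refine and_congr_right fun hρ => ?_
  rw [lpSum_eq_orliczModular hM hp.le z hρ, ← ENNReal.one_rpow (1 / p),
    ENNReal.rpow_le_rpow_iff (by positivity)]
  rfl

section Difference

section AddCommGroup

variable {G : Type*} [AddCommGroup G] {m : ℕ}

-- The witness sums the recursion along the residue class of `k` modulo `m`.
theorem exists_sub_add_eq (hm : 0 < m) (c v : ℕ → G) :
    ∃ x : ℕ → G, (∀ r < m, x r = c r) ∧ ∀ k, x k - x (k + m) = v k := by
  refine ⟨fun k => c (k % m) - ∑ i ∈ Finset.range (k / m), v (k % m + m * i), fun r hr => ?_,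
    fun k => ?_⟩
  · simp only [Nat.mod_eq_of_lt hr, Nat.div_eq_of_lt hr, Finset.range_zero, Finset.sum_empty,
      sub_zero]
  · simp only [Nat.add_mod_right, Nat.add_div_right k hm, Finset.sum_range_succ, Nat.mod_add_div]
    abel

theorem eq_of_sub_add_eq_of_lt (hm : 0 < m) {N : ℕ} {x y : ℕ → G} (hinit : ∀ r < m, x r = y r)
    (hsub : ∀ k < N, x k - x (k + m) = y k - y (k + m)) : ∀ k < N + m, x k = y k := by
  intro k
  induction k using Nat.strong_induction_on with
  | h k ih =>
    intro hk
    rcases lt_or_ge k m with hkm | hkm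
    · exact hinit k hkm
    · obtain ⟨j, rfl⟩ := Nat.exists_eq_add_of_le' hkm
      have hj := hsub j (by lia)
      rwa [ih j (by lia) (by lia), sub_right_inj] at hj

end AddCommGroup

variable {m : ℕ}

theorem delta_succ_eq_delta_sub (m n : ℕ) (x : ℕ → ℝ) :
    delta m (n + 1) x = delta m n fun k => x k - x (k + m) := by
  induction n with
  | zero => rfl
  | succ n ih =>
    funext k
    rw [delta, ih, delta]

theorem exists_delta_eq (hm : 0 < m) (n : ℕ) (c y : ℕ → ℝ) :
    ∃ x : ℕ → ℝ, (∀ r < m * n, x r = c r) ∧ delta m n x = y := by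
  induction n generalizing c with
  | zero => exact ⟨y, fun r hr => absurd hr (Nat.not_lt_zero r), rfl⟩
  | succ n ih =>
    obtain ⟨u, hu, rfl⟩ := ih fun k => c k - c (k + m)
    obtain ⟨x, hinit, hx⟩ := exists_sub_add_eq hm c u
    refine ⟨x, eq_of_sub_add_eq_of_lt hm hinit fun k hk => (hx k).trans (hu k hk), ?_⟩
    rw [delta_succ_eq_delta_sub, funext hx]

theorem eq_of_delta_eq (hm : 0 < m) {n : ℕ} {x y : ℕ → ℝ} (hinit : ∀ r < m * n, x r = y r)
    (hdelta : delta m n x = delta m n y) : x = y := by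
  induction n generalizing x y with
  | zero => exact hdelta
  | succ n ih =>
    rw [Nat.mul_succ] at hinit
    have hsub : (fun k => x k - x (k + m)) = fun k => y k - y (k + m) :=
      ih (fun r hr => by rw [hinit r (by lia), hinit (r + m) (by lia)])
        (by rwa [← delta_succ_eq_delta_sub, ← delta_succ_eq_delta_sub])
    exact funext fun k => eq_of_sub_add_eq_of_lt hm (fun r hr => hinit r (by lia))
      (fun j _ => congrFun hsub j) k (Nat.lt_add_of_pos_right hm)

end Difference

namespace lpMDelta

variable {M : ℝ → ℝ} {p : ℝ} {m n : ℕ}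

/-- A sequence of `ℓ_p(M, Δ_m^n)` given by its first `m * n` terms, which carry the `ℓ¹` norm, and
its `n`-th difference, which carries the Luxemburg norm of `M ^ p`. -/
noncomputable def coordinates (hM : IsOrliczFunction M) (hp : 1 ≤ p) (x : lpMDelta M p m n) :
    WithLp 1 (PiLp 1 (fun _ : Fin (m * n) => ℝ) ×
      GaugeSpan (orliczBall fun t => M t ^ p : Set (ℕ → ℝ))) :=
  WithLp.toLp 1 (WithLp.toLp 1 fun r => x.1 r, ⟨delta m n x, (mem_lpMDelta_iff hM hp).1 x.2⟩)

theorem bijective_coordinates (hM : IsOrliczFunction M) (hp : 1 ≤ p) (hm : 0 < m) :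
    Function.Bijective (coordinates (m := m) (n := n) hM hp) := by
  constructor
  · intro x y hxy
    have hinit : ∀ r < m * n, x.1 r = y.1 r := fun r hr =>
      congrArg (fun q => q.fst ⟨r, hr⟩) hxy
    have hdelta : delta m n x = delta m n y := congrArg (fun q => GaugeSpan.val q.snd) hxy
    exact Subtype.ext (eq_of_delta_eq hm hinit hdelta)
  · rintro ⟨⟨c⟩, z⟩
    obtain ⟨x, hinit, hx⟩ :=
      exists_delta_eq hm n (fun k => if h : k < m * n then c ⟨k, h⟩ else 0) (GaugeSpan.val z)
    have hmem : x ∈ lpMDelta M p m n :=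
      (mem_lpMDelta_iff hM hp).2 (hx ▸ GaugeSpan.val_mem_span z)
    refine ⟨⟨x, hmem⟩, WithLp.ofLp_injective 1 (Prod.ext (WithLp.ofLp_injective 1 ?_)
      (GaugeSpan.val_injective hx))⟩
    funext r
    exact (hinit r r.2).trans (dif_pos r.2)

theorem dist_coordinates (hM : IsOrliczFunction M) (hp : 1 ≤ p)
    [IsClosedBoundedDisk (orliczBall fun t => M t ^ p : Set (ℕ → ℝ))] (x y : lpMDelta M p m n) :
    dist (coordinates hM hp x) (coordinates hM hp y) = f3 M p m n x y := by
  rw [WithLp.prod_dist_eq_of_L1, PiLp.dist_eq_of_L1, GaugeSpan.dist_eq,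
    gauge_orliczBall_eq_sInf hM (one_pos.trans_le hp), f3, Finset.sum_range]
  rfl

end lpMDelta

theorem lpDelta_complete_metric (M : ℝ → ℝ) (hM : IsOrliczFunction M) (p : ℝ) (hp : 1 ≤ p)
    (m n : ℕ) (hm : 1 ≤ m) (hn : 1 ≤ n) :
    ∃ inst : MetricSpace (lpMDelta M p m n),
      (∀ a b : lpMDelta M p m n, @dist _ inst.toDist a b = f3 M p m n a.1 b.1) ∧
        @CompleteSpace _ inst.toUniformSpace := by
  have hdisk : IsClosedBoundedDisk (orliczBall fun t => M t ^ p : Set (ℕ → ℝ)) :=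
    isClosedBoundedDisk_orliczBall (hM.rpow hp)
  obtain ⟨inst, hdist, hcomplete⟩ := exists_metricSpace_completeSpace_of_bijective
    (lpMDelta.bijective_coordinates (n := n) hM hp hm)
  exact ⟨inst, fun x y => (hdist x y).trans (lpMDelta.dist_coordinates hM hp x y), hcomplete⟩
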